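/- Let G be a non-abelian group of unitary n×n matrices with rank(AB − BA) ≤ 2 for all A, B ∈ G, and let M be a linear subspace of ℂⁿ. Define G(M) = {T ∈ G : T M ⊆ M}. Then G(M) = G(M^⊥), G(M) is a subgroup of G, and at least one of the restriction groups G(M)|_M or G(M)|_{M^⊥} is abelian. -/

import Mathlib

open Matrix

open Module in
/-- A linear isometry of determinant one which differs from the identity by a map of rank at most
one is the identity. -/
lemma LinearMap.eq_one_of_isometry_of_det_eq_one_of_finrank_range_sub_one_le_one
    {V : Type*} [NormedAddCommGroup V] [InnerProductSpace ℂ V] [FiniteDimensional ℂ V]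
    (f : End ℂ V) (hf : ∀ x, ‖f x‖ = ‖x‖) (hdet : LinearMap.det f = 1)
    (hrank : finrank ℂ (LinearMap.range (f - 1)) ≤ 1) : f = 1 := by
  obtain ⟨v, hv⟩ := (Submodule.finrank_le_one_iff_isPrincipal _).1 hrank
  have hmem (x : V) : (f - 1) x ∈ Submodule.span ℂ {v} := hv ▸ LinearMap.mem_range_self (f - 1) x
  by_cases hv0 : v = 0
  · ext x
    have := hmem x
    simpa [hv0, sub_eq_zero] using this
  let φ : Dual ℂ V := (LinearEquiv.coord ℂ V v hv0).toLinearMap ∘ₗ (f - 1).codRestrict _ hmem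
  have hφ (x : V) : f x = x + φ x • v := by
    have : φ x • v = (f - 1) x := LinearEquiv.coord_apply_smul ℂ V v hv0 ⟨(f - 1) x, hmem x⟩
    simp [this]
  have hφv : φ v = 0 := by
    have h : f = LinearMap.transvection φ v := by
      ext x
      simp [hφ, LinearMap.transvection.apply]
    simpa [h] using hdet
  have hfv : f v = v := by simp [hφ, hφv]
  let e : V →ₗᵢ[ℂ] V := ⟨f, hf⟩
  ext x
  have h : inner ℂ (f x) (f v) = inner ℂ x v := e.inner_map_map x v
  rw [hfv, hφ x, inner_add_left, inner_smul_left] at h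
  have h0 : φ x = 0 := by simpa [hv0] using h
  simp [hφ, h0]

/-- A group which is covered by two subgroups is equal to one of them. -/
lemma Subgroup.eq_top_or_eq_top_of_forall_mem {H : Type*} [Group H] (K L : Subgroup H)
    (h : ∀ x, x ∈ K ∨ x ∈ L) : K = ⊤ ∨ L = ⊤ := by
  simp only [Subgroup.eq_top_iff']
  by_contra! hKL
  obtain ⟨⟨x, hx⟩, y, hy⟩ := hKL
  have hxL := (h x).resolve_left hx
  have hyK := (h y).resolve_right hy
  rcases h (x * y) with hxy | hxy
  · exact hx ((K.mul_mem_cancel_right hyK).1 hxy)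
  · exact hy ((L.mul_mem_cancel_left hxL).1 hxy)

/-- If any two elements of a group commute in one of two quotients, then one of the quotients is
commutative. -/
lemma MonoidHom.forall_commute_or_forall_commute {H P Q : Type*} [Group H] [Group P] [Group Q]
    (f : H →* P) (g : H →* Q) (h : ∀ a b, Commute (f a) (f b) ∨ Commute (g a) (g b)) :
    (∀ a b, Commute (f a) (f b)) ∨ ∀ a b, Commute (g a) (g b) := by
  have key (a : H) : (∀ b, Commute (f b) (f a)) ∨ ∀ b, Commute (g b) (g a) := by
    simpa [Subgroup.eq_top_iff', Subgroup.mem_centralizer_singleton_iff, commute_iff_eq] using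
      Subgroup.eq_top_or_eq_top_of_forall_mem
        ((Subgroup.centralizer {f a}).comap f) ((Subgroup.centralizer {g a}).comap g) fun b ↦ by
          simpa [Subgroup.mem_centralizer_singleton_iff, commute_iff_eq] using h b a
  have := Subgroup.eq_top_or_eq_top_of_forall_mem
    ((Subgroup.centralizer (Set.range f)).comap f) ((Subgroup.centralizer (Set.range g)).comap g)
    fun a ↦ by
      simpa [Subgroup.mem_centralizer_iff, commute_iff_eq] using key a
  refine this.imp (fun h a b ↦ ?_) (fun h a b ↦ ?_) <;>
  · have := Subgroup.eq_top_iff' _ |>.1 h b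
    simp only [Subgroup.mem_comap, Subgroup.mem_centralizer_iff, Set.forall_mem_range] at this
    exact this a

section Restrict

open Module
open scoped commutatorElement

variable {V H : Type*} [NormedAddCommGroup V] [InnerProductSpace ℂ V] [Group H]

/-- The restriction of a linear action to an invariant subspace. -/
def MonoidHom.restrictEnd (ρ : H →* End ℂ V) (N : Submodule ℂ V)
    (hN : ∀ h, ∀ x ∈ N, ρ h x ∈ N) : H →* End ℂ N where
  toFun h := (ρ h).restrict (hN h)
  map_one' := by ext; simp
  map_mul' a b := by ext; simp

lemma MonoidHom.commute_of_map_commutatorElement_eq_one {P : Type*} [Monoid P] (f : H →* P)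
    (a b : H) (h : f ⁅a, b⁆ = 1) : Commute (f a) (f b) := by
  have : f (⁅a, b⁆ * (b * a)) = f (b * a) := by rw [map_mul, h, one_mul]
  rw [commute_iff_eq, ← map_mul, ← map_mul, ← this]
  simp [commutatorElement_def, mul_assoc]

lemma MonoidHom.det_map_commutatorElement (ρ : H →* End ℂ V) (a b : H) :
    LinearMap.det (ρ ⁅a, b⁆) = 1 := by
  have := map_commutatorElement (LinearMap.det.comp ρ).toHomUnits a b
  rw [commutatorElement_eq_one_iff_mul_comm.2 (mul_comm ((LinearMap.det.comp ρ).toHomUnits a) _)] at this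
  exact congrArg Units.val this

variable [FiniteDimensional ℂ V]

/-- If two elements do not commute on an invariant subspace, then their group commutator minus the
identity has rank at least two on it. -/
lemma MonoidHom.two_le_finrank_map_of_not_commute (ρ : H →* End ℂ V) (hρ : ∀ h x, ‖ρ h x‖ = ‖x‖)
    (N : Submodule ℂ V) (hN : ∀ h, ∀ x ∈ N, ρ h x ∈ N) (a b : H)
    (hab : ¬ Commute (ρ.restrictEnd N hN a) (ρ.restrictEnd N hN b)) :
    2 ≤ finrank ℂ (N.map (ρ ⁅a, b⁆ - 1)) ∧ N.map (ρ ⁅a, b⁆ - 1) ≤ N := by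
  constructor
  · by_contra! hlt
    refine hab (commute_of_map_commutatorElement_eq_one _ a b ?_)
    refine LinearMap.eq_one_of_isometry_of_det_eq_one_of_finrank_range_sub_one_le_one _
      (fun x ↦ hρ _ x) (det_map_commutatorElement _ a b) ?_
    have : (LinearMap.range (ρ.restrictEnd N hN ⁅a, b⁆ - 1)).map N.subtype =
        N.map (ρ ⁅a, b⁆ - 1) := by
      rw [← LinearMap.range_comp, ← LinearMap.range_domRestrict]
      rfl
    rw [← Submodule.finrank_map_subtype_eq, this]
    omega
  · rintro _ ⟨x, hx, rfl⟩
    exact N.sub_mem (hN _ x hx) hx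

/-- A group of isometries whose additive commutators have rank at most two acts commutatively on
an invariant subspace or on its orthogonal complement. -/
lemma MonoidHom.forall_commute_restrictEnd_or_orthogonal (ρ : H →* End ℂ V)
    (hρ : ∀ h x, ‖ρ h x‖ = ‖x‖)
    (hrank : ∀ a b, finrank ℂ (LinearMap.range (ρ a * ρ b - ρ b * ρ a)) ≤ 2)
    (M : Submodule ℂ V) (hM : ∀ h, ∀ x ∈ M, ρ h x ∈ M) (hM' : ∀ h, ∀ x ∈ Mᗮ, ρ h x ∈ Mᗮ) :
    (∀ a b, Commute (ρ.restrictEnd M hM a) (ρ.restrictEnd M hM b)) ∨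
      ∀ a b, Commute (ρ.restrictEnd Mᗮ hM' a) (ρ.restrictEnd Mᗮ hM' b) := by
  have key := forall_commute_or_forall_commute (ρ.restrictEnd M hM).toHomUnits
    (ρ.restrictEnd Mᗮ hM').toHomUnits
  simp only [← Commute.units_val_iff, MonoidHom.coe_toHomUnits] at key
  refine key fun a b ↦ ?_
  by_contra! hab
  obtain ⟨h₁, h₁'⟩ := ρ.two_le_finrank_map_of_not_commute hρ M hM a b hab.1
  obtain ⟨h₂, h₂'⟩ := ρ.two_le_finrank_map_of_not_commute hρ Mᗮ hM' a b hab.2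
  have hcomm : ρ a * ρ b - ρ b * ρ a = (ρ ⁅a, b⁆ - 1) * ρ (b * a) := by
    rw [sub_mul, one_mul, ← map_mul, ← map_mul, ← map_mul]
    simp [commutatorElement_def, mul_assoc]
  have hsurj : LinearMap.range (ρ (b * a)) = ⊤ := by
    refine LinearMap.range_eq_top.2 fun x ↦ ⟨ρ (b * a)⁻¹ x, ?_⟩
    rw [← Module.End.mul_apply, ← map_mul, mul_inv_cancel, map_one, Module.End.one_apply]
  have hle := hrank a b
  rw [hcomm, Module.End.mul_eq_comp, LinearMap.range_comp_of_range_eq_top _ hsurj] at hle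
  have hsup : M.map (ρ ⁅a, b⁆ - 1) ⊔ Mᗮ.map (ρ ⁅a, b⁆ - 1) ≤ LinearMap.range (ρ ⁅a, b⁆ - 1) :=
    sup_le LinearMap.map_le_range LinearMap.map_le_range
  have := Submodule.finrank_mono hsup
  have hdisj := Submodule.finrank_sup_add_finrank_inf_eq
    (M.map (ρ ⁅a, b⁆ - 1)) (Mᗮ.map (ρ ⁅a, b⁆ - 1))
  rw [(M.orthogonal_disjoint.mono h₁' h₂').eq_bot, finrank_bot] at hdisj
  omega

/-- An invertible linear map which maps a subspace into itself does so with its inverse. -/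
lemma MonoidHom.map_inv_mem_of_map_le (ρ : H →* End ℂ V) (N : Submodule ℂ V) (h : H)
    (hN : N.map (ρ h) ≤ N) {x : V} (hx : x ∈ N) : ρ h⁻¹ x ∈ N := by
  have hinv (y : V) : ρ h⁻¹ (ρ h y) = y := by
    rw [← Module.End.mul_apply, ← map_mul, inv_mul_cancel, map_one, Module.End.one_apply]
  have hinj : Function.Injective (ρ h) := Function.LeftInverse.injective hinv
  have heq : N.map (ρ h) = N := Submodule.eq_of_le_of_finrank_eq hN
    (Submodule.equivMapOfInjective _ hinj N).finrank_eq.symm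
  rw [← heq] at hx
  obtain ⟨y, hy, rfl⟩ := hx
  rwa [hinv]

lemma MonoidHom.map_orthogonal_le (ρ : H →* End ℂ V) (hρ : ∀ h x, ‖ρ h x‖ = ‖x‖)
    (N : Submodule ℂ V) (h : H) (hN : N.map (ρ h) ≤ N) : Nᗮ.map (ρ h) ≤ Nᗮ := by
  rintro _ ⟨x, hx, rfl⟩
  rw [Submodule.mem_orthogonal]
  intro y hy
  let e : V →ₗᵢ[ℂ] V := ⟨ρ h, hρ h⟩
  have hinv : ρ h (ρ h⁻¹ y) = y := by
    rw [← Module.End.mul_apply, ← map_mul, mul_inv_cancel, map_one, Module.End.one_apply]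
  have := e.inner_map_map (ρ h⁻¹ y) x
  change inner ℂ (ρ h (ρ h⁻¹ y)) (ρ h x) = _ at this
  rw [hinv] at this
  rw [this]
  exact hx _ (ρ.map_inv_mem_of_map_le N h hN hy)

/-- The stabilizer of a subspace. -/
def MonoidHom.subspaceStabilizer (ρ : H →* End ℂ V) (N : Submodule ℂ V) : Subgroup H where
  carrier := {h | N.map (ρ h) ≤ N}
  one_mem' := by simp [Module.End.one_eq_id]
  mul_mem' {a b} ha hb := by
    rintro _ ⟨x, hx, rfl⟩
    rw [map_mul]
    exact ha ⟨_, hb ⟨x, hx, rfl⟩, rfl⟩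
  inv_mem' {a} ha := by
    rintro _ ⟨x, hx, rfl⟩
    exact ρ.map_inv_mem_of_map_le N a ha hx

end Restrict

/-- The natural action of the unitary group on Euclidean space. -/
noncomputable def Matrix.unitaryGroup.toEuclideanEnd (n : ℕ) :
    Matrix.unitaryGroup (Fin n) ℂ →* Module.End ℂ (EuclideanSpace ℂ (Fin n)) where
  toFun T := Matrix.toEuclideanLin (T : Matrix (Fin n) (Fin n) ℂ)
  map_one' := by ext; simp
  map_mul' a b := by ext; simp [Matrix.toLpLin_apply]

lemma Matrix.unitaryGroup.norm_toEuclideanEnd_apply (n : ℕ) (T : Matrix.unitaryGroup (Fin n) ℂ)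
    (x : EuclideanSpace ℂ (Fin n)) : ‖toEuclideanEnd n T x‖ = ‖x‖ := by
  change ‖Matrix.toEuclideanLin (T : Matrix (Fin n) (Fin n) ℂ) x‖ = ‖x‖
  rw [@norm_eq_sqrt_re_inner ℂ, @norm_eq_sqrt_re_inner ℂ, ← LinearMap.adjoint_inner_left,
    ← Matrix.toEuclideanLin_conjTranspose_eq_adjoint]
  have h : (T : Matrix (Fin n) (Fin n) ℂ)ᴴ * (T : Matrix (Fin n) (Fin n) ℂ) = 1 :=
    Matrix.UnitaryGroup.star_mul_self T
  simp [Matrix.toLpLin_apply, h]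

/-- For a non-abelian unitary group `G` with `rank (AB - BA) ≤ 2` and a subspace `M`,
the stabilizer `G(M)` equals `G(M^⊥)`, is a subgroup, and at least one of the restriction
groups `G(M)|_M`, `G(M)|_{M^⊥}` is abelian. -/
theorem stmt9 (n : ℕ) (G : Subgroup (Matrix.unitaryGroup (Fin n) ℂ))
    (hna : ∃ A ∈ G, ∃ B ∈ G, A * B ≠ B * A)
    (hr : ∀ A ∈ G, ∀ B ∈ G,
      ((A : Matrix (Fin n) (Fin n) ℂ) * (B : Matrix (Fin n) (Fin n) ℂ)
        - (B : Matrix (Fin n) (Fin n) ℂ) * (A : Matrix (Fin n) (Fin n) ℂ)).rank ≤ 2)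
    (M : Submodule ℂ (EuclideanSpace ℂ (Fin n))) :
    (∀ T ∈ G,
      (M.map (Matrix.toEuclideanLin (T : Matrix (Fin n) (Fin n) ℂ)) ≤ M ↔
        Mᗮ.map (Matrix.toEuclideanLin (T : Matrix (Fin n) (Fin n) ℂ)) ≤ Mᗮ)) ∧
    (∃ H : Subgroup (Matrix.unitaryGroup (Fin n) ℂ),
      (H : Set (Matrix.unitaryGroup (Fin n) ℂ)) =
        {T | T ∈ G ∧ M.map (Matrix.toEuclideanLin (T : Matrix (Fin n) (Fin n) ℂ)) ≤ M}) ∧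
    ((∀ T₁ ∈ G, ∀ T₂ ∈ G,
        M.map (Matrix.toEuclideanLin (T₁ : Matrix (Fin n) (Fin n) ℂ)) ≤ M →
        M.map (Matrix.toEuclideanLin (T₂ : Matrix (Fin n) (Fin n) ℂ)) ≤ M →
        ∀ x ∈ M,
          Matrix.toEuclideanLin (T₁ : Matrix (Fin n) (Fin n) ℂ)
              (Matrix.toEuclideanLin (T₂ : Matrix (Fin n) (Fin n) ℂ) x) =
            Matrix.toEuclideanLin (T₂ : Matrix (Fin n) (Fin n) ℂ)
              (Matrix.toEuclideanLin (T₁ : Matrix (Fin n) (Fin n) ℂ) x)) ∨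
     (∀ T₁ ∈ G, ∀ T₂ ∈ G,
        M.map (Matrix.toEuclideanLin (T₁ : Matrix (Fin n) (Fin n) ℂ)) ≤ M →
        M.map (Matrix.toEuclideanLin (T₂ : Matrix (Fin n) (Fin n) ℂ)) ≤ M →
        ∀ x ∈ Mᗮ,
          Matrix.toEuclideanLin (T₁ : Matrix (Fin n) (Fin n) ℂ)
              (Matrix.toEuclideanLin (T₂ : Matrix (Fin n) (Fin n) ℂ) x) =
            Matrix.toEuclideanLin (T₂ : Matrix (Fin n) (Fin n) ℂ)
              (Matrix.toEuclideanLin (T₁ : Matrix (Fin n) (Fin n) ℂ) x))) := by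
  let ρ := Matrix.unitaryGroup.toEuclideanEnd n
  have hρ : ∀ T x, ‖ρ T x‖ = ‖x‖ := Matrix.unitaryGroup.norm_toEuclideanEnd_apply n
  refine ⟨fun T _ ↦ ⟨ρ.map_orthogonal_le hρ M T, fun h ↦ ?_⟩, ⟨G ⊓ ρ.subspaceStabilizer M, rfl⟩, ?_⟩
  · have h' := ρ.map_orthogonal_le hρ Mᗮ T h
    rwa [Submodule.orthogonal_orthogonal] at h'
  let K := G ⊓ ρ.subspaceStabilizer M
  have hrank (a b : K) : Module.finrank ℂ (LinearMap.range
      (ρ.comp K.subtype a * ρ.comp K.subtype b - ρ.comp K.subtype b * ρ.comp K.subtype a)) ≤ 2 := by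
    have h := hr a a.2.1 b b.2.1
    rw [Matrix.rank_eq_finrank_range_toLin _ (PiLp.basisFun 2 ℂ (Fin n))
      (PiLp.basisFun 2 ℂ (Fin n)), ← Matrix.toLpLin_eq_toLin] at h
    have heq : ρ.comp K.subtype a * ρ.comp K.subtype b - ρ.comp K.subtype b * ρ.comp K.subtype a =
        Matrix.toEuclideanLin ((a : Matrix (Fin n) (Fin n) ℂ) * (b : Matrix (Fin n) (Fin n) ℂ)
          - (b : Matrix (Fin n) (Fin n) ℂ) * (a : Matrix (Fin n) (Fin n) ℂ)) := by
      rw [← map_mul, ← map_mul, map_sub]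
      rfl
    rwa [heq]
  refine ((ρ.comp K.subtype).forall_commute_restrictEnd_or_orthogonal (fun T ↦ hρ T) hrank M
    (fun T x hx ↦ T.2.2 ⟨x, hx, rfl⟩)
    (fun T x hx ↦ ρ.map_orthogonal_le hρ M T T.2.2 ⟨x, hx, rfl⟩)).imp ?_ ?_ <;>
  · intro h T₁ hT₁ T₂ hT₂ hM₁ hM₂ x hx
    exact congrArg Subtype.val
      (LinearMap.congr_fun (h ⟨T₁, hT₁, hM₁⟩ ⟨T₂, hT₂, hM₂⟩).eq ⟨x, hx⟩)
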